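/- Mass scaling method of Hoffmann et al.: with m = 24 degrees of freedom per element, let K = Σ_{e=1}^N L_e^T·K_e·L_e with each K_e ∈ ℝ^{24×24} symmetric positive semidefinite; for each e let m_e > 0 and set M_e = (m_e/8)·I_24 and E_e = I_3 ⊗ [(β·m_e/32)·(A ⊗ G)], where β ≥ 0, A = [[1,−1],[−1,1]] ∈ ℝ^{2×2} and G = [[4,2,1,2],[2,4,2,1],[1,2,4,2],[2,1,2,4]] ∈ ℝ^{4×4}; let M = Σ_{e=1}^N L_e^T·M_e·L_e and M̄ = Σ_{e=1}^N L_e^T·(M_e + E_e)·L_e. Then: (1) for every i = 1,…,n, λ_i(K, M̄) ≤ λ_i(K, M) ≤ (1 + 9β/2)·λ_i(K, M̄), i.e. 1 ≤ ω_i/ω̄_i ≤ √(1 + 9β/2) wherever ω̄_i > 0; and (2) κ(M̄)/κ(M) ≤ 1 + 9β/2. -/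

import Mathlib

open Matrix Kronecker

/-- The eigenvalues of a symmetric real matrix listed in ascending order with multiplicity. -/
noncomputable def sortedEigs {n : ℕ} (M : Matrix (Fin n) (Fin n) ℝ) : Fin n → ℝ :=
  if h : M.IsHermitian then h.eigenvalues ∘ Tuple.sort h.eigenvalues else 0

-- The generalized eigenvalues `λ_1(A,B) ≤ … ≤ λ_n(A,B)`: the eigenvalues of
-- `B^{-1/2} A B^{-1/2}` in ascending order with multiplicity (`B` positive definite).
open Classical MatrixOrder in
noncomputable def genEigs {n : ℕ} (A B : Matrix (Fin n) (Fin n) ℝ) : Fin n → ℝ :=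
  if hB : B.PosDef then sortedEigs ((CFC.sqrt B)⁻¹ * A * (CFC.sqrt B)⁻¹) else 0

/-- The spectral condition number `κ(A) = λ_max(A)/λ_min(A)`. -/
noncomputable def specCond {n : ℕ} (M : Matrix (Fin (n+1)) (Fin (n+1)) ℝ) : ℝ :=
  sortedEigs M (Fin.last n) / sortedEigs M 0

/-- The Boolean connectivity matrix `L_e` of an element whose local-to-global map is `σ`:
its rows are the standard basis vectors of `ℝ^n` selected by `σ`. -/
def elemL {ι : Type*} {n : ℕ} (σ : ι → Fin n) : Matrix ι (Fin n) ℝ :=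
  Matrix.of fun i j => if σ i = j then 1 else 0

/-!
In the Loewner order the scaled mass matrix satisfies `M ≤ M̄ ≤ (1 + 9β/2) • M`. This can be checked
element by element, where it says `0 ≤ A ⊗ G ≤ 18`, which follows from `0 ≤ A ≤ 2` and `0 ≤ G ≤ 9`.
By the Courant–Fischer principle a Loewner inequality between two matrices passes to their
ordered eigenvalues, and, for `K ≥ 0`, an inequality between the masses of two pencils passes to
their ordered generalized eigenvalues in the opposite direction.
-/

open scoped MatrixOrder

section QuadraticForm

variable {ι κ : Type*} [Fintype ι] [Fintype κ]

lemma dotProduct_transpose_mul_mul_mulVec (L : Matrix ι κ ℝ) (A : Matrix ι ι ℝ) (x : κ → ℝ) :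
    x ⬝ᵥ ((Lᵀ * A * L) *ᵥ x) = (L *ᵥ x) ⬝ᵥ (A *ᵥ (L *ᵥ x)) := by
  rw [← mulVec_mulVec, ← mulVec_mulVec, dotProduct_mulVec, vecMul_transpose]

lemma dotProduct_mulVec_le_of_le {A B : Matrix ι ι ℝ} (h : A ≤ B) (x : ι → ℝ) :
    x ⬝ᵥ (A *ᵥ x) ≤ x ⬝ᵥ (B *ᵥ x) := by
  simpa only [star_trivial, sub_mulVec, dotProduct_sub, sub_nonneg] using
    (le_iff.1 h).dotProduct_mulVec_nonneg x

lemma dotProduct_mulVec_le_mul_of_le_smul {A B : Matrix ι ι ℝ} {c : ℝ} (h : A ≤ c • B)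
    (x : ι → ℝ) : x ⬝ᵥ (A *ᵥ x) ≤ c * (x ⬝ᵥ (B *ᵥ x)) := by
  simpa only [smul_mulVec, dotProduct_smul, smul_eq_mul] using dotProduct_mulVec_le_of_le h x

end QuadraticForm

lemma posDef_of_le {ι : Type*} {A B : Matrix ι ι ℝ} (hA : A.PosDef) (h : A ≤ B) : B.PosDef :=
  add_sub_cancel A B ▸ hA.add_posSemidef (le_iff.1 h)

lemma posSemidef_transpose_mul_mul {ι κ : Type*} [Fintype ι] [Finite κ] {A : Matrix ι ι ℝ}
    (hA : A.PosSemidef) (L : Matrix ι κ ℝ) : (Lᵀ * A * L).PosSemidef := by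
  cases nonempty_fintype κ
  simpa only [conjTranspose_eq_transpose_of_trivial] using hA.conjTranspose_mul_mul_same L

section Eigenvalues

variable {n : ℕ} {A A' B B' : Matrix (Fin n) (Fin n) ℝ}

lemma sortedEigs_of_isHermitian (hA : A.IsHermitian) :
    sortedEigs A = hA.eigenvalues ∘ Tuple.sort hA.eigenvalues :=
  dif_pos hA

lemma monotone_sortedEigs (hA : A.IsHermitian) : Monotone (sortedEigs A) :=
  sortedEigs_of_isHermitian hA ▸ Tuple.monotone_sort _

lemma sortedEigs_nonneg (hA : A.PosSemidef) (i : Fin n) : 0 ≤ sortedEigs A i := by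
  rw [sortedEigs_of_isHermitian hA.isHermitian]
  exact hA.eigenvalues_nonneg _

lemma sortedEigs_pos (hA : A.PosDef) (i : Fin n) : 0 < sortedEigs A i := by
  rw [sortedEigs_of_isHermitian hA.isHermitian]
  exact hA.eigenvalues_pos _

lemma exists_orthogonal_diagonalization (hA : A.IsHermitian) :
    ∃ U : Matrix (Fin n) (Fin n) ℝ, Uᵀ * U = 1 ∧ Uᵀ * diagonal (sortedEigs A) * U = A := by
  let V : Matrix (Fin n) (Fin n) ℝ := hA.eigenvectorUnitary
  let p := Tuple.sort hA.eigenvalues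
  have hV : V * Vᵀ = 1 := Unitary.coe_mul_star_self hA.eigenvectorUnitary
  have hspec : V * diagonal hA.eigenvalues * Vᵀ = A := hA.spectral_theorem.symm
  refine ⟨Vᵀ.submatrix p id, ?_, ?_⟩
  · rw [transpose_submatrix, transpose_transpose, submatrix_mul_equiv, hV, submatrix_id_id]
  · rw [sortedEigs_of_isHermitian hA, ← submatrix_diagonal_equiv, transpose_submatrix,
      transpose_transpose, submatrix_mul_equiv, submatrix_mul_equiv, hspec, submatrix_id_id]

lemma genEigs_of_posDef (A : Matrix (Fin n) (Fin n) ℝ) (hB : B.PosDef) :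
    genEigs A B = sortedEigs ((CFC.sqrt B)⁻¹ * A * (CFC.sqrt B)⁻¹) := by
  rw [genEigs, dif_pos hB]

lemma genEigs_one_right (A : Matrix (Fin n) (Fin n) ℝ) : genEigs A 1 = sortedEigs A := by
  rw [genEigs_of_posDef A .one, CFC.sqrt_one, inv_one, one_mul, mul_one]

lemma transpose_sqrt (B : Matrix (Fin n) (Fin n) ℝ) : (CFC.sqrt B)ᵀ = CFC.sqrt B :=
  (nonneg_iff_posSemidef.1 (CFC.sqrt_nonneg B)).isHermitian

lemma isUnit_det_sqrt (hB : B.PosDef) : IsUnit (CFC.sqrt B).det := by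
  have hsq : CFC.sqrt B * CFC.sqrt B = B := CFC.sqrt_mul_sqrt_self B hB.posSemidef.nonneg
  refine isUnit_of_mul_isUnit_left (y := (CFC.sqrt B).det) ?_
  rw [← det_mul, hsq]
  exact hB.det_pos.ne'.isUnit

lemma isHermitian_inv_sqrt_mul_mul (hA : A.IsHermitian) (B : Matrix (Fin n) (Fin n) ℝ) :
    ((CFC.sqrt B)⁻¹ * A * (CFC.sqrt B)⁻¹).IsHermitian := by
  simpa only [conjTranspose_eq_transpose_of_trivial, transpose_nonsing_inv, transpose_sqrt] using
    isHermitian_conjTranspose_mul_mul (CFC.sqrt B)⁻¹ hA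

lemma posSemidef_inv_sqrt_mul_mul (hA : A.PosSemidef) (B : Matrix (Fin n) (Fin n) ℝ) :
    ((CFC.sqrt B)⁻¹ * A * (CFC.sqrt B)⁻¹).PosSemidef := by
  simpa only [transpose_nonsing_inv, transpose_sqrt] using
    posSemidef_transpose_mul_mul hA (CFC.sqrt B)⁻¹

lemma genEigs_nonneg (hA : A.PosSemidef) (hB : B.PosDef) (i : Fin n) : 0 ≤ genEigs A B i := by
  rw [genEigs_of_posDef A hB]
  exact sortedEigs_nonneg (posSemidef_inv_sqrt_mul_mul hA B) i

lemma monotone_genEigs (hA : A.IsHermitian) (hB : B.PosDef) : Monotone (genEigs A B) := by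
  rw [genEigs_of_posDef A hB]
  exact monotone_sortedEigs (isHermitian_inv_sqrt_mul_mul hA B)

lemma exists_simultaneous_diagonalization (hA : A.IsHermitian) (hB : B.PosDef) :
    ∃ Q : Matrix (Fin n) (Fin n) ℝ, Qᵀ * Q = B ∧ Qᵀ * diagonal (genEigs A B) * Q = A := by
  obtain ⟨U, hU, hdiag⟩ := exists_orthogonal_diagonalization (isHermitian_inv_sqrt_mul_mul hA B)
  have hsq : CFC.sqrt B * CFC.sqrt B = B := CFC.sqrt_mul_sqrt_self B hB.posSemidef.nonneg
  have hdet := isUnit_det_sqrt hB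
  refine ⟨U * CFC.sqrt B, ?_, ?_⟩
  · calc (U * CFC.sqrt B)ᵀ * (U * CFC.sqrt B) = CFC.sqrt B * (Uᵀ * U) * CFC.sqrt B := by
          rw [transpose_mul, transpose_sqrt]; noncomm_ring
      _ = B := by rw [hU, mul_one, hsq]
  · calc (U * CFC.sqrt B)ᵀ * diagonal (genEigs A B) * (U * CFC.sqrt B)
        = CFC.sqrt B * (Uᵀ * diagonal (genEigs A B) * U) * CFC.sqrt B := by
          rw [transpose_mul, transpose_sqrt]; noncomm_ring
      _ = CFC.sqrt B * (CFC.sqrt B)⁻¹ * A * ((CFC.sqrt B)⁻¹ * CFC.sqrt B) := by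
          rw [genEigs_of_posDef A hB, hdiag]; noncomm_ring
      _ = A := by rw [mul_nonsing_inv _ hdet, nonsing_inv_mul _ hdet, one_mul, mul_one]

lemma exists_eigencoordinates (hA : A.IsHermitian) (hB : B.PosDef) :
    ∃ Q : Matrix (Fin n) (Fin n) ℝ, ∀ x, x ⬝ᵥ (B *ᵥ x) = ∑ j, (Q *ᵥ x) j ^ 2 ∧
      x ⬝ᵥ (A *ᵥ x) = ∑ j, genEigs A B j * (Q *ᵥ x) j ^ 2 := by
  obtain ⟨Q, hQB, hQA⟩ := exists_simultaneous_diagonalization hA hB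
  refine ⟨Q, fun x => ⟨?_, ?_⟩⟩
  · rw [← mul_one Qᵀ] at hQB
    conv_lhs => rw [← hQB, dotProduct_transpose_mul_mul_mulVec, one_mulVec]
    simp only [dotProduct, sq]
  · conv_lhs => rw [← hQA, dotProduct_transpose_mul_mul_mulVec]
    simp only [dotProduct, mulVec_diagonal]
    exact Finset.sum_congr rfl fun j _ => by ring

lemma exists_submodule_dotProduct_mulVec_le (hA : A.IsHermitian) (hB : B.PosDef) (i : Fin n) :
    ∃ W : Submodule ℝ (Fin n → ℝ), (i : ℕ) < Module.finrank ℝ W ∧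
      ∀ x ∈ W, x ⬝ᵥ (A *ᵥ x) ≤ genEigs A B i * (x ⬝ᵥ (B *ᵥ x)) := by
  obtain ⟨Q, hQ⟩ := exists_eigencoordinates hA hB
  let upper : (Fin n → ℝ) →ₗ[ℝ] ({j // i < j} → ℝ) :=
    LinearMap.funLeft ℝ ℝ Subtype.val ∘ₗ Q.mulVecLin
  refine ⟨LinearMap.ker upper, ?_, fun x hx => ?_⟩
  · have hrange : Module.finrank ℝ (LinearMap.range upper) ≤ n - 1 - i := by
      simpa [Fintype.card_subtype, Finset.filter_lt_eq_Ioi] using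
        Submodule.finrank_le (LinearMap.range upper)
    have hsum := upper.finrank_range_add_finrank_ker
    rw [Module.finrank_fin_fun] at hsum
    omega
  · have hzero : ∀ j, i < j → (Q *ᵥ x) j = 0 := fun j hj => congrFun hx ⟨j, hj⟩
    rw [(hQ x).1, (hQ x).2, Finset.mul_sum]
    refine Finset.sum_le_sum fun j _ => ?_
    rcases le_or_gt j i with hji | hij
    · exact mul_le_mul_of_nonneg_right (monotone_genEigs hA hB hji) (sq_nonneg _)
    · simp [hzero j hij]

lemma genEigs_le_of_forall_mem_submodule (hA : A.IsHermitian) (hB : B.PosDef) {i : Fin n}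
    {W : Submodule ℝ (Fin n → ℝ)} (hW : (i : ℕ) < Module.finrank ℝ W) {μ : ℝ}
    (h : ∀ x ∈ W, x ⬝ᵥ (A *ᵥ x) ≤ μ * (x ⬝ᵥ (B *ᵥ x))) : genEigs A B i ≤ μ := by
  obtain ⟨Q, hQ⟩ := exists_eigencoordinates hA hB
  let lower : W →ₗ[ℝ] ({j // j < i} → ℝ) :=
    LinearMap.funLeft ℝ ℝ Subtype.val ∘ₗ Q.mulVecLin ∘ₗ W.subtype
  have hker : LinearMap.ker lower ≠ ⊥ :=
    LinearMap.ker_ne_bot_of_finrank_lt <| by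
      simpa [Fintype.card_subtype, Finset.filter_gt_eq_Iio] using hW
  obtain ⟨⟨x, hxW⟩, hx, hx0⟩ := (Submodule.ne_bot_iff _).1 hker
  have hzero : ∀ j, j < i → (Q *ᵥ x) j = 0 := fun j hj => congrFun hx ⟨j, hj⟩
  have hpos : 0 < x ⬝ᵥ (B *ᵥ x) := hB.dotProduct_mulVec_pos fun h0 => hx0 (Subtype.ext h0)
  refine le_of_mul_le_mul_right (le_trans ?_ (h x hxW)) hpos
  rw [(hQ x).1, (hQ x).2, Finset.mul_sum]
  refine Finset.sum_le_sum fun j _ => ?_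
  rcases lt_or_ge j i with hji | hij
  · simp [hzero j hji]
  · exact mul_le_mul_of_nonneg_right (monotone_genEigs hA hB hij) (sq_nonneg _)

theorem isLeast_genEigs_courantFischer (hA : A.IsHermitian) (hB : B.PosDef) (i : Fin n) :
    IsLeast {μ | ∃ W : Submodule ℝ (Fin n → ℝ), (i : ℕ) < Module.finrank ℝ W ∧
      ∀ x ∈ W, x ⬝ᵥ (A *ᵥ x) ≤ μ * (x ⬝ᵥ (B *ᵥ x))} (genEigs A B i) :=
  ⟨exists_submodule_dotProduct_mulVec_le hA hB i,
    fun _ ⟨_, hW, h⟩ => genEigs_le_of_forall_mem_submodule hA hB hW h⟩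

lemma genEigs_le_mul_of_le_smul_left {c : ℝ} (hA : A.IsHermitian) (hA' : A'.IsHermitian)
    (hB : B.PosDef) (hc : 0 ≤ c) (h : A ≤ c • A') (i : Fin n) :
    genEigs A B i ≤ c * genEigs A' B i := by
  obtain ⟨W, hW, hle⟩ := (isLeast_genEigs_courantFischer hA' hB i).1
  refine (isLeast_genEigs_courantFischer hA hB i).2 ⟨W, hW, fun x hx => ?_⟩
  calc x ⬝ᵥ (A *ᵥ x) ≤ c * (x ⬝ᵥ (A' *ᵥ x)) := dotProduct_mulVec_le_mul_of_le_smul h x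
    _ ≤ c * (genEigs A' B i * (x ⬝ᵥ (B *ᵥ x))) := mul_le_mul_of_nonneg_left (hle x hx) hc
    _ = c * genEigs A' B i * (x ⬝ᵥ (B *ᵥ x)) := (mul_assoc ..).symm

lemma genEigs_le_mul_of_le_smul_right {c : ℝ} (hA : A.PosSemidef) (hB : B.PosDef)
    (hB' : B'.PosDef) (h : B' ≤ c • B) (i : Fin n) :
    genEigs A B i ≤ c * genEigs A B' i := by
  obtain ⟨W, hW, hle⟩ := (isLeast_genEigs_courantFischer hA.isHermitian hB' i).1
  refine (isLeast_genEigs_courantFischer hA.isHermitian hB i).2 ⟨W, hW, fun x hx => ?_⟩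
  calc x ⬝ᵥ (A *ᵥ x) ≤ genEigs A B' i * (x ⬝ᵥ (B' *ᵥ x)) := hle x hx
    _ ≤ genEigs A B' i * (c * (x ⬝ᵥ (B *ᵥ x))) :=
        mul_le_mul_of_nonneg_left (dotProduct_mulVec_le_mul_of_le_smul h x)
          (genEigs_nonneg hA hB' i)
    _ = c * genEigs A B' i * (x ⬝ᵥ (B *ᵥ x)) := by ring

lemma genEigs_le_of_le_right (hA : A.PosSemidef) (hB' : B'.PosDef) (h : B' ≤ B) (i : Fin n) :
    genEigs A B i ≤ genEigs A B' i := by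
  simpa only [one_mul] using
    genEigs_le_mul_of_le_smul_right hA (posDef_of_le hB' h) hB' (h.trans_eq (one_smul ℝ B).symm) i

lemma sortedEigs_le_mul_of_le_smul {c : ℝ} (hA : A.IsHermitian) (hA' : A'.IsHermitian)
    (hc : 0 ≤ c) (h : A ≤ c • A') (i : Fin n) : sortedEigs A i ≤ c * sortedEigs A' i := by
  simpa only [genEigs_one_right] using genEigs_le_mul_of_le_smul_left hA hA' .one hc h i

lemma sortedEigs_le_of_le (hA : A.IsHermitian) (hA' : A'.IsHermitian) (h : A ≤ A') (i : Fin n) :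
    sortedEigs A i ≤ sortedEigs A' i := by
  simpa only [one_mul] using
    sortedEigs_le_mul_of_le_smul hA hA' zero_le_one (h.trans_eq (one_smul ℝ A').symm) i

end Eigenvalues

lemma sqrt_div_sqrt_bounds {a b c : ℝ} (hb : 0 < b) (hba : b ≤ a) (hac : a ≤ c * b) :
    1 ≤ √a / √b ∧ √a / √b ≤ √c := by
  rw [← Real.sqrt_div' a hb.le]
  exact ⟨Real.one_le_sqrt.2 ((one_le_div hb).2 hba), Real.sqrt_le_sqrt ((div_le_iff₀ hb).2 hac)⟩

lemma specCond_div_specCond_le {n : ℕ} {A B : Matrix (Fin (n + 1)) (Fin (n + 1)) ℝ} {c : ℝ}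
    (hA : A.PosDef) (hc : 0 ≤ c) (hAB : A ≤ B) (hBA : B ≤ c • A) :
    specCond B / specCond A ≤ c := by
  have hB := posDef_of_le hA hAB
  have hmin := sortedEigs_pos hA 0
  have hmax := sortedEigs_pos hA (Fin.last n)
  refine (div_le_iff₀ (div_pos hmax hmin)).2 ?_
  calc specCond B ≤ c * sortedEigs A (Fin.last n) / sortedEigs A 0 :=
        div_le_div₀ (mul_nonneg hc hmax.le)
          (sortedEigs_le_mul_of_le_smul hB.isHermitian hA.isHermitian hc hBA _) hmin
          (sortedEigs_le_of_le hA.isHermitian hB.isHermitian hAB 0)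
    _ = c * specCond A := mul_div_assoc ..

section Assembly

variable {ε ι κ : Type*} [Fintype ε] [Fintype ι]

/-- The matrix `∑ e, L_eᵀ X_e L_e` assembled from the element matrices `X_e` along
the connectivity matrices `L_e`. -/
def assemble (L : ε → Matrix ι κ ℝ) (X : ε → Matrix ι ι ℝ) : Matrix κ κ ℝ :=
  ∑ e, (L e)ᵀ * X e * L e

variable {L : ε → Matrix ι κ ℝ} {X Y : ε → Matrix ι ι ℝ}

lemma assemble_sub : assemble L (X - Y) = assemble L X - assemble L Y := by
  simp only [assemble, Pi.sub_apply, Matrix.mul_sub, Matrix.sub_mul, Finset.sum_sub_distrib]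

lemma assemble_smul (c : ℝ) : assemble L (c • X) = c • assemble L X := by
  simp only [assemble, Pi.smul_apply, Matrix.mul_smul, Matrix.smul_mul, Finset.smul_sum]

lemma posSemidef_assemble [Finite κ] (hX : ∀ e, (X e).PosSemidef) : (assemble L X).PosSemidef :=
  posSemidef_sum _ fun e _ => posSemidef_transpose_mul_mul (hX e) (L e)

lemma assemble_mono [Finite κ] (h : ∀ e, X e ≤ Y e) : assemble L X ≤ assemble L Y := by
  rw [le_iff, ← assemble_sub]
  exact posSemidef_assemble fun e => le_iff.1 (h e)

lemma posDef_assemble [Fintype κ] (hL : ∀ x, (∀ e, L e *ᵥ x = 0) → x = 0) (hX : ∀ e, (X e).PosDef) :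
    (assemble L X).PosDef := by
  have hpsd : (assemble L X).PosSemidef := posSemidef_assemble fun e => (hX e).posSemidef
  refine .of_dotProduct_mulVec_pos hpsd.isHermitian fun x hx => ?_
  obtain ⟨e, he⟩ : ∃ e, L e *ᵥ x ≠ 0 := by
    by_contra! h
    exact hx (hL x h)
  rw [star_trivial, assemble, sum_mulVec, dotProduct_sum]
  simp only [dotProduct_transpose_mul_mul_mulVec]
  exact Finset.sum_pos' (fun e _ => (hX e).posSemidef.dotProduct_mulVec_nonneg _)
    ⟨e, Finset.mem_univ e, (hX e).dotProduct_mulVec_pos he⟩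

end Assembly

lemma elemL_mulVec {ι : Type*} {n : ℕ} (σ : ι → Fin n) (x : Fin n → ℝ) :
    elemL σ *ᵥ x = x ∘ σ := by
  ext j
  simp [elemL, mulVec, dotProduct]

lemma eq_zero_of_forall_elemL_mulVec_eq_zero {ε ι : Type*} {n : ℕ} {σ : ε → ι → Fin n}
    (hσ : ∀ i, ∃ e j, σ e j = i) (x : Fin n → ℝ) (hx : ∀ e, elemL (σ e) *ᵥ x = 0) : x = 0 := by
  ext i
  obtain ⟨e, j, rfl⟩ := hσ i
  exact congrFun (elemL_mulVec (σ e) x ▸ hx e) j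

section Element

lemma kronecker_le_smul_one {ι κ : Type*} [Finite ι] [Finite κ] [DecidableEq ι] [DecidableEq κ]
    {A : Matrix ι ι ℝ} {B : Matrix κ κ ℝ} {a b : ℝ} (ha : 0 ≤ a) (hA : A ≤ a • 1)
    (hB₀ : 0 ≤ B) (hB : B ≤ b • 1) : A ⊗ₖ B ≤ (a * b) • 1 := by
  cases nonempty_fintype ι
  cases nonempty_fintype κ
  have hsplit : (a * b) • 1 - A ⊗ₖ B = (a • 1 - A) ⊗ₖ B + a • (1 ⊗ₖ (b • 1 - B)) := by
    rw [← one_kronecker_one]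
    ext i j
    simp only [Matrix.sub_apply, Matrix.add_apply, Matrix.smul_apply, kroneckerMap_apply,
      smul_eq_mul]
    ring
  rw [le_iff, hsplit]
  exact ((le_iff.1 hA).kronecker (nonneg_iff_posSemidef.1 hB₀)).add
    ((PosSemidef.one.kronecker (le_iff.1 hB)).smul ha)

/-- The factor `A` of the scaling matrix: its quadratic form is the square of the difference
between the values on the two opposite faces of a hexahedron. -/
def faceDifference : Matrix (Fin 2) (Fin 2) ℝ :=
  !![1, -1; -1, 1]

/-- The factor `G` of the scaling matrix: up to a factor, the consistent mass matrix of the four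
nodes of a face, numbered cyclically. -/
def faceMass : Matrix (Fin 4) (Fin 4) ℝ :=
  !![4, 2, 1, 2; 2, 4, 2, 1; 1, 2, 4, 2; 2, 1, 2, 4]

lemma faceDifference_nonneg : 0 ≤ faceDifference := by
  have h : faceDifference = vecMulVec ![1, -1] (star ![1, -1]) := by
    ext i j
    fin_cases i <;> fin_cases j <;> simp [faceDifference, vecMulVec]
  exact h ▸ (posSemidef_vecMulVec_self_star _).nonneg

lemma faceDifference_le : faceDifference ≤ (2 : ℝ) • 1 := by
  have h : (2 : ℝ) • 1 - faceDifference = vecMulVec ![1, 1] (star ![1, 1]) := by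
    ext i j
    fin_cases i <;> fin_cases j <;> norm_num [faceDifference, vecMulVec]
  exact le_iff.2 (h ▸ posSemidef_vecMulVec_self_star _)

lemma isHermitian_faceMass : faceMass.IsHermitian := by
  ext i j
  fin_cases i <;> fin_cases j <;> rfl

/-- `faceMass` is circulant, with eigenvectors `(1, 1, 1, 1)`, `(1, -1, 1, -1)`, `(1, 0, -1, 0)`,
`(0, 1, 0, -1)` for the eigenvalues `9`, `1`, `3`, `3`: the sum of squares is its
spectral decomposition. -/
lemma dotProduct_faceMass_mulVec (x : Fin 4 → ℝ) :
    x ⬝ᵥ (faceMass *ᵥ x) = 9 / 4 * (x 0 + x 1 + x 2 + x 3) ^ 2 +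
      1 / 4 * (x 0 - x 1 + x 2 - x 3) ^ 2 + 3 / 2 * (x 0 - x 2) ^ 2 + 3 / 2 * (x 1 - x 3) ^ 2 := by
  simp only [faceMass, dotProduct, mulVec, Fin.sum_univ_four, of_apply, cons_val]
  ring

lemma faceMass_nonneg : 0 ≤ faceMass := by
  refine (PosSemidef.of_dotProduct_mulVec_nonneg isHermitian_faceMass fun x => ?_).nonneg
  rw [star_trivial, dotProduct_faceMass_mulVec]
  positivity

lemma faceMass_le : faceMass ≤ (9 : ℝ) • 1 := by
  have hherm : ((9 : ℝ) • 1 - faceMass).IsHermitian :=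
    (PosSemidef.one.smul (by norm_num)).isHermitian.sub isHermitian_faceMass
  refine le_iff.2 (.of_dotProduct_mulVec_nonneg hherm fun x => ?_)
  have hsq : x ⬝ᵥ (((9 : ℝ) • 1 - faceMass) *ᵥ x) =
      2 * (x 0 - x 1 + x 2 - x 3) ^ 2 + 3 * (x 0 - x 2) ^ 2 + 3 * (x 1 - x 3) ^ 2 := by
    rw [sub_mulVec, dotProduct_sub, dotProduct_faceMass_mulVec, smul_mulVec, one_mulVec]
    simp only [dotProduct, Fin.sum_univ_four, Pi.smul_apply, smul_eq_mul]
    ring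
  rw [star_trivial, hsq]
  positivity

/-- The degrees of freedom of a hexahedron: displacement component, face, node of the face. -/
abbrev HexDof : Type := Fin 3 × Fin 2 × Fin 4

/-- The lumped mass matrix `M_e` of a hexahedron of mass `m`. -/
noncomputable def lumpedMass (m : ℝ) : Matrix HexDof HexDof ℝ :=
  (m / 8) • 1

/-- The scaling matrix `E_e` of Hoffmann et al. for a hexahedron of mass `m`. -/
noncomputable def hoffmannScaling (β m : ℝ) : Matrix HexDof HexDof ℝ :=
  1 ⊗ₖ ((β * m / 32) • (faceDifference ⊗ₖ faceMass))

variable {β m : ℝ}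

lemma posDef_lumpedMass (hm : 0 < m) : (lumpedMass m).PosDef :=
  PosDef.one.smul (by positivity)

lemma smul_faceDifference_kronecker_faceMass_nonneg {s : ℝ} (hs : 0 ≤ s) :
    0 ≤ s • (faceDifference ⊗ₖ faceMass) :=
  (((nonneg_iff_posSemidef.1 faceDifference_nonneg).kronecker
    (nonneg_iff_posSemidef.1 faceMass_nonneg)).smul hs).nonneg

lemma smul_faceDifference_kronecker_faceMass_le {s : ℝ} (hs : 0 ≤ s) :
    s • (faceDifference ⊗ₖ faceMass) ≤ (s * 18) • 1 := by
  have h : faceDifference ⊗ₖ faceMass ≤ (2 * 9 : ℝ) • 1 :=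
    kronecker_le_smul_one zero_le_two faceDifference_le faceMass_nonneg faceMass_le
  rw [le_iff] at h ⊢
  convert h.smul hs using 1
  rw [smul_sub, smul_smul]
  norm_num

lemma hoffmannScaling_nonneg (hβ : 0 ≤ β) (hm : 0 ≤ m) : 0 ≤ hoffmannScaling β m :=
  (PosSemidef.one.kronecker (nonneg_iff_posSemidef.1
    (smul_faceDifference_kronecker_faceMass_nonneg (by positivity)))).nonneg

lemma hoffmannScaling_le (hβ : 0 ≤ β) (hm : 0 ≤ m) :
    hoffmannScaling β m ≤ (9 * β / 2) • lumpedMass m := by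
  have hs : 0 ≤ β * m / 32 := by positivity
  calc hoffmannScaling β m ≤ (1 * (β * m / 32 * 18)) • 1 :=
        kronecker_le_smul_one zero_le_one (one_smul ℝ _).ge
          (smul_faceDifference_kronecker_faceMass_nonneg hs)
          (smul_faceDifference_kronecker_faceMass_le hs)
    _ = (9 * β / 2) • lumpedMass m := by
        rw [lumpedMass, smul_smul]
        ring_nf

end Element

section MassScaling

variable {ε κ : Type*} [Fintype ε] [Finite κ] {β : ℝ} {m : ε → ℝ}

lemma assemble_lumpedMass_le (hβ : 0 ≤ β) (hm : ∀ e, 0 ≤ m e) (L : ε → Matrix HexDof κ ℝ) :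
    assemble L (fun e => lumpedMass (m e)) ≤
      assemble L (fun e => lumpedMass (m e) + hoffmannScaling β (m e)) :=
  assemble_mono fun e => le_add_of_nonneg_right (hoffmannScaling_nonneg hβ (hm e))

lemma assemble_add_hoffmannScaling_le (hβ : 0 ≤ β) (hm : ∀ e, 0 ≤ m e)
    (L : ε → Matrix HexDof κ ℝ) :
    assemble L (fun e => lumpedMass (m e) + hoffmannScaling β (m e)) ≤
      (1 + 9 * β / 2) • assemble L (fun e => lumpedMass (m e)) := by
  rw [← assemble_smul]
  refine assemble_mono fun e => ?_
  rw [Pi.smul_apply, add_smul, one_smul]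
  exact add_le_add_right (hoffmannScaling_le hβ (hm e)) _

end MassScaling

theorem hoffmann_mass_scaling_bounds_general {ε : Type*} [Fintype ε] {n : ℕ} {β : ℝ} (hβ : 0 ≤ β)
    {L : ε → Matrix HexDof (Fin (n + 1)) ℝ} (hL : ∀ x, (∀ e, L e *ᵥ x = 0) → x = 0)
    {m : ε → ℝ} (hm : ∀ e, 0 < m e) {K M Mbar : Matrix (Fin (n + 1)) (Fin (n + 1)) ℝ}
    (hK : K.PosSemidef) (hM : M = assemble L fun e => lumpedMass (m e))
    (hMbar : Mbar = assemble L fun e => lumpedMass (m e) + hoffmannScaling β (m e)) :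
    (∀ i : Fin (n + 1),
      (genEigs K Mbar i ≤ genEigs K M i ∧
        genEigs K M i ≤ (1 + 9 * β / 2) * genEigs K Mbar i) ∧
      (0 < genEigs K Mbar i →
        1 ≤ √(genEigs K M i) / √(genEigs K Mbar i) ∧
        √(genEigs K M i) / √(genEigs K Mbar i) ≤ √(1 + 9 * β / 2))) ∧
    specCond Mbar / specCond M ≤ 1 + 9 * β / 2 := by
  have hMpos : M.PosDef := hM ▸ posDef_assemble hL fun e => posDef_lumpedMass (hm e)
  have hlower : M ≤ Mbar := hM ▸ hMbar ▸ assemble_lumpedMass_le hβ (fun e => (hm e).le) L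
  have hupper : Mbar ≤ (1 + 9 * β / 2) • M :=
    hM ▸ hMbar ▸ assemble_add_hoffmannScaling_le hβ (fun e => (hm e).le) L
  have hle (i) : genEigs K Mbar i ≤ genEigs K M i := genEigs_le_of_le_right hK hMpos hlower i
  have hge (i) : genEigs K M i ≤ (1 + 9 * β / 2) * genEigs K Mbar i :=
    genEigs_le_mul_of_le_smul_right hK hMpos (posDef_of_le hMpos hlower) hupper i
  exact ⟨fun i => ⟨⟨hle i, hge i⟩, fun hpos => sqrt_div_sqrt_bounds hpos (hle i) (hge i)⟩,
    specCond_div_specCond_le hMpos (by positivity) hlower hupper⟩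

/-- **Mass scaling of Hoffmann et al. (2023)** (Corollary `bounds_hoffmann`).
Elements have `m = 24 = 3·2·4` degrees of freedom (index type `Fin 3 × (Fin 2 × Fin 4)`).
With `M_e = (m_e/8)·I_24`, `E_e = I_3 ⊗ ((β·m_e/32)·(A ⊗ G))` for
`A = [[1,−1],[−1,1]]`, `G = [[4,2,1,2],[2,4,2,1],[1,2,4,2],[2,1,2,4]]` and `β ≥ 0`,
`K = Σ_e L_eᵀ·K_e·L_e` (each `K_e ⪰ 0` symmetric), `M = Σ_e L_eᵀ·M_e·L_e` and
`M̄ = Σ_e L_eᵀ·(M_e + E_e)·L_e`, one has for every `i`: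
`λ_i(K,M̄) ≤ λ_i(K,M) ≤ (1 + 9β/2)·λ_i(K,M̄)` (equivalently `1 ≤ ω_i/ω̄_i ≤ √(1+9β/2)`
wherever `ω̄_i > 0`), and `κ(M̄)/κ(M) ≤ 1 + 9β/2`. -/
theorem hoffmann_mass_scaling_bounds {N n pmax : ℕ} (hpmax : 0 < pmax)
    (β : ℝ) (hβ : 0 ≤ β)
    (σ : Fin (N+1) → (Fin 3 × Fin 2 × Fin 4) → Fin (n+1))
    (hinj : ∀ e, Function.Injective (σ e))
    (hcover : ∀ i : Fin (n+1), ∃ e j, σ e j = i)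
    (hp : ∀ i : Fin (n+1), (Finset.univ.filter fun e => ∃ j, σ e j = i).card ≤ pmax)
    (Ke : Fin (N+1) → Matrix (Fin 3 × Fin 2 × Fin 4) (Fin 3 × Fin 2 × Fin 4) ℝ)
    (hKe : ∀ e, (Ke e).PosSemidef)
    (me : Fin (N+1) → ℝ) (hme : ∀ e, 0 < me e)
    (Me Ee : Fin (N+1) → Matrix (Fin 3 × Fin 2 × Fin 4) (Fin 3 × Fin 2 × Fin 4) ℝ)
    (hMe : ∀ e, Me e =
      (me e / 8) • (1 : Matrix (Fin 3 × Fin 2 × Fin 4) (Fin 3 × Fin 2 × Fin 4) ℝ))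
    (hEe : ∀ e, Ee e = (1 : Matrix (Fin 3) (Fin 3) ℝ) ⊗ₖ
      ((β * me e / 32) •
        ((!![1, -1; -1, 1] : Matrix (Fin 2) (Fin 2) ℝ) ⊗ₖ
          (!![4, 2, 1, 2; 2, 4, 2, 1; 1, 2, 4, 2; 2, 1, 2, 4] : Matrix (Fin 4) (Fin 4) ℝ))))
    (K M Mbar : Matrix (Fin (n+1)) (Fin (n+1)) ℝ)
    (hK : K = ∑ e, (elemL (σ e))ᵀ * Ke e * elemL (σ e))
    (hM : M = ∑ e, (elemL (σ e))ᵀ * Me e * elemL (σ e))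
    (hMbar : Mbar = ∑ e, (elemL (σ e))ᵀ * (Me e + Ee e) * elemL (σ e)) :
    (∀ i : Fin (n+1),
      (genEigs K Mbar i ≤ genEigs K M i ∧
        genEigs K M i ≤ (1 + 9 * β / 2) * genEigs K Mbar i) ∧
      (0 < genEigs K Mbar i →
        1 ≤ Real.sqrt (genEigs K M i) / Real.sqrt (genEigs K Mbar i) ∧
        Real.sqrt (genEigs K M i) / Real.sqrt (genEigs K Mbar i) ≤
          Real.sqrt (1 + 9 * β / 2))) ∧
    specCond Mbar / specCond M ≤ 1 + 9 * β / 2 := by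
  obtain ⟨rfl, rfl⟩ : Me = _ ∧ Ee = _ := ⟨funext hMe, funext hEe⟩
  exact hoffmann_mass_scaling_bounds_general hβ (eq_zero_of_forall_elemL_mulVec_eq_zero hcover) hme
    (hK ▸ posSemidef_assemble hKe) hM hMbar
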